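/- For every μ ∈ ℂ, the characteristic polynomials of the NP matrices are given explicitly by det(μ I_N − K_{N,c}) = f_N^−(μ) and det(μ I_N − K_{N,s}) = f_N^+(μ), where the real matrices K_{N,c} and K_{N,s} are viewed as complex matrices and I_N is the N×N identity matrix. -/

import Mathlib

/-!
The matrix `μ I - K` is semiseparable: it has entries `u i * v j` above the diagonal
and `p i * q j` below it. Let `D m` be the determinant of its leading `m × m` block and `H m` the
determinant of that block bordered by the column `u`, the row `q` and the corner `0`. Row and
column operations give, over any commutative ring,
`D (m+1) = d m * D m + p m * v m * H m` (`leadDet_semiSep_succ`) and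
`H (m+1) = (d m - p m * q m - u m * v m) * H m - u m * q m * D m` (`leadDet_bordered_succ`).

On the other side, `fFun` is a sum over subsets of `{1, …, N}`; let `E N` and `O N` be its parts
from subsets of even and odd size. Adjoining the largest index `N + 1` to a subset flips the
parity of its size and puts `ξ (N+1)` in the last position, so `(E, O)` obeys a two-term linear
recursion as well (`evenPart_succ`, `oddPart_succ`). For the NP matrices the two recursions match
under `D = E + O`, `H = ± 2 * O` (`leadDet_npArray`).
-/

open Finset

/-- The signed exponential sum
`Σ_{lo ≤ i_1 < ⋯ < i_k ≤ hi} (−1)^{i_1+⋯+i_k} exp(2 n Σ_{l=1}^{k} (−1)^l ξ_{i_l})`,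
where the `l`-th smallest element of a subset `s` carries the sign `(−1)^l`
(the position of `i ∈ s` is `(s.filter (· ≤ i)).card`). For `k = 0` the sum is `1`. -/
noncomputable def sgnExpSum (n : ℕ) (ξ : ℕ → ℝ) (lo hi k : ℕ) : ℝ :=
  ∑ s ∈ (Finset.Icc lo hi).powersetCard k,
    (-1 : ℝ) ^ (∑ i ∈ s, i) *
      Real.exp (2 * n * ∑ i ∈ s, (-1 : ℝ) ^ ((s.filter (· ≤ i)).card) * ξ i)

/-- The function `f_N^±(λ) = Σ_{k=0}^{N} (λ^{N−k} / e^k) · sgnExpSum k`,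
where `e = 2` gives `f_N^+` and `e = −2` gives `f_N^−`. -/
noncomputable def fFun (n N : ℕ) (ξ : ℕ → ℝ) (e : ℝ) (l : ℂ) : ℂ :=
  ∑ k ∈ Finset.range (N + 1),
    l ^ (N - k) / (e : ℂ) ^ k * ((sgnExpSum n ξ 1 N k : ℝ) : ℂ)

/-- The transposed `n`-order even NP matrix `K_{N,c}`. -/
noncomputable def Kc (n N : ℕ) (ξ : ℕ → ℝ) : Matrix (Fin N) (Fin N) ℝ :=
  fun a b =>
    if a = b then
      (-1 : ℝ) ^ ((a : ℕ) + 1) * (Real.exp (-(2 * n * ξ ((a : ℕ) + 1))) / 2)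
    else if a < b then
      (-1 : ℝ) ^ ((a : ℕ) + 1) * (Real.cosh (n * ξ ((b : ℕ) + 1)) * Real.exp (-(n * ξ ((a : ℕ) + 1))))
    else
      (-1 : ℝ) ^ (a : ℕ) * (Real.sinh (n * ξ ((a : ℕ) + 1)) * Real.exp (-(n * ξ ((b : ℕ) + 1))))

/-- The transposed `n`-order odd NP matrix `K_{N,s}`. -/
noncomputable def Ks (n N : ℕ) (ξ : ℕ → ℝ) : Matrix (Fin N) (Fin N) ℝ :=
  fun a b =>
    if a = b then
      (-1 : ℝ) ^ (a : ℕ) * (Real.exp (-(2 * n * ξ ((a : ℕ) + 1))) / 2)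
    else if a < b then
      (-1 : ℝ) ^ ((a : ℕ) + 1) * (Real.sinh (n * ξ ((b : ℕ) + 1)) * Real.exp (-(n * ξ ((a : ℕ) + 1))))
    else
      (-1 : ℝ) ^ (a : ℕ) * (Real.cosh (n * ξ ((a : ℕ) + 1)) * Real.exp (-(n * ξ ((b : ℕ) + 1))))

/-! ### Determinants of semiseparable matrices -/

section Semiseparable

variable {R : Type*} [CommRing R]

/-- The determinant of the leading `m × m` block of an infinite array. -/
def leadDet (m : ℕ) (F : ℕ → ℕ → R) : R :=
  (Matrix.of fun a b : Fin m => F a b).det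

lemma leadDet_congr {m : ℕ} {F G : ℕ → ℕ → R} (h : ∀ i < m, ∀ j < m, F i j = G i j) :
    leadDet m F = leadDet m G := by
  unfold leadDet
  congr 1
  ext a b
  exact h a a.2 b b.2

lemma leadDet_transpose (m : ℕ) (F : ℕ → ℕ → R) :
    leadDet m (fun i j => F j i) = leadDet m F := by
  unfold leadDet
  rw [← Matrix.det_transpose]
  rfl

lemma leadDet_last_row (m : ℕ) (F : ℕ → ℕ → R) (h : ∀ j < m, F m j = 0) :
    leadDet (m + 1) F = F m m * leadDet m F := by
  unfold leadDet
  rw [Matrix.det_succ_row _ (Fin.last m), Fin.sum_univ_castSucc, Finset.sum_eq_zero]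
  · have h1 : (-1 : R) ^ (m + m) = 1 := Even.neg_one_pow ⟨m, rfl⟩
    simp only [Matrix.of_apply, Fin.val_last, h1, zero_add, one_mul, Fin.succAbove_last]
    congr 1
  · intro b _
    simp [h b b.2]

lemma leadDet_last_col (m : ℕ) (F : ℕ → ℕ → R) (h : ∀ i < m, F i m = 0) :
    leadDet (m + 1) F = F m m * leadDet m F := by
  rw [← leadDet_transpose, leadDet_last_row _ _ h, leadDet_transpose]

/-- Linearity of the determinant in the last row. -/
lemma leadDet_row_linear (m : ℕ) (F : ℕ → ℕ → R) (c : R) (r s : ℕ → R)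
    (h : ∀ j ≤ m, F m j = c * r j + s j) :
    leadDet (m + 1) F = c * leadDet (m + 1) (fun i j => if i = m then r j else F i j)
      + leadDet (m + 1) (fun i j => if i = m then s j else F i j) := by
  have key : ∀ r : ℕ → R, leadDet (m + 1) (fun i j => if i = m then r j else F i j) =
      ((Matrix.of fun a b : Fin (m + 1) => F a b).updateRow (Fin.last m)
        (fun b => r b)).det := by
    intro r
    unfold leadDet
    congr 1
    ext a b
    simp only [Matrix.of_apply, Matrix.updateRow_apply, Fin.ext_iff, Fin.val_last]
  rw [key, key, ← Matrix.det_updateRow_smul, ← Matrix.det_updateRow_add]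
  unfold leadDet
  congr 1
  ext a b
  simp only [Matrix.of_apply, Matrix.updateRow_apply, Pi.add_apply, Pi.smul_apply, smul_eq_mul]
  split_ifs with ha
  · subst ha
    exact h b (Nat.lt_succ_iff.mp b.2)
  · rfl

lemma leadDet_col_linear (m : ℕ) (F : ℕ → ℕ → R) (c : R) (r s : ℕ → R)
    (h : ∀ i ≤ m, F i m = c * r i + s i) :
    leadDet (m + 1) F = c * leadDet (m + 1) (fun i j => if j = m then r i else F i j)
      + leadDet (m + 1) (fun i j => if j = m then s i else F i j) := by
  rw [← leadDet_transpose, leadDet_row_linear m (fun i j => F j i) c r s h,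
    ← leadDet_transpose (m + 1) (fun i j => if j = m then r i else F i j),
    ← leadDet_transpose (m + 1) (fun i j => if j = m then s i else F i j)]

lemma leadDet_row_eq (m : ℕ) (F : ℕ → ℕ → R) (h : ∀ j < m + 2, F m j = F (m + 1) j) :
    leadDet (m + 2) F = 0 := by
  unfold leadDet
  refine Matrix.det_zero_of_row_eq (i := ⟨m, by omega⟩) (j := ⟨m + 1, by omega⟩) ?_ ?_
  · simp [Fin.ext_iff]
  · ext b
    exact h b b.2

lemma leadDet_col_eq (m : ℕ) (F : ℕ → ℕ → R) (h : ∀ i < m + 2, F i m = F i (m + 1)) :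
    leadDet (m + 2) F = 0 := by
  rw [← leadDet_transpose, leadDet_row_eq _ _ h]

lemma leadDet_swap_col (m : ℕ) (F : ℕ → ℕ → R) :
    leadDet (m + 2) (fun i j => F i (Equiv.swap m (m + 1) j)) = -leadDet (m + 2) F := by
  unfold leadDet
  have hs : ∀ a : Fin (m + 2), (Equiv.swap m (m + 1) (a : ℕ)) =
      ((Equiv.swap (⟨m, by omega⟩ : Fin (m + 2)) ⟨m + 1, by omega⟩ a : Fin (m + 2)) : ℕ) := by
    intro a
    simp only [Equiv.swap_apply_def, Fin.ext_iff]
    split_ifs <;> rfl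
  have h := Matrix.det_permute' (Equiv.swap (⟨m, by omega⟩ : Fin (m + 2)) ⟨m + 1, by omega⟩)
    (Matrix.of fun a b : Fin (m + 2) => F a b)
  rw [Equiv.Perm.sign_swap (by simp [Fin.ext_iff])] at h
  simp only [Units.val_neg, Units.val_one, Int.cast_neg, Int.cast_one, neg_mul, one_mul] at h
  rw [← h]
  congr 1
  ext a b
  simp [hs]

lemma leadDet_swap_row (m : ℕ) (F : ℕ → ℕ → R) :
    leadDet (m + 2) (fun i j => F (Equiv.swap m (m + 1) i) j) = -leadDet (m + 2) F := by
  rw [← leadDet_transpose, ← leadDet_transpose (m + 2) F]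
  exact leadDet_swap_col m (fun i j => F j i)

variable (u v p q d : ℕ → R)

/-- The semiseparable array with diagonal `d`, entries `u i * v j` above the diagonal and
`p i * q j` below it. -/
def semiSep (i j : ℕ) : R :=
  if i = j then d i else if i < j then u i * v j else p i * q j

/-- `semiSep`, truncated to size `m` and bordered by the column `u`, the row `q` and the
corner `0`, which sit at index `m`. -/
def bordered (m i j : ℕ) : R :=
  if i < m then (if j < m then semiSep u v p q d i j else u i)
  else if j < m then q j else 0

lemma leadDet_semiSep_succ (m : ℕ) :
    leadDet (m + 1) (semiSep u v p q d) = d m * leadDet m (semiSep u v p q d)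
      + p m * v m * leadDet (m + 1) (bordered u v p q d m) := by
  rw [leadDet_row_linear m _ (p m) (fun j => if j < m then q j else 0)
    (fun j => if j < m then 0 else d m)]
  · rw [leadDet_last_row m (fun i j => if i = m then (if j < m then 0 else d m)
      else semiSep u v p q d i j) (by intro j hj; simp [hj]),
      leadDet_col_linear m _ (v m) (fun i => if i < m then u i else 0) (fun i => 0)]
    · rw [leadDet_last_col m (fun i j => if j = m then 0 else _) (by simp)]
      have h1 : leadDet m (fun i j => if i = m then (if j < m then 0 else d m)
          else semiSep u v p q d i j) = leadDet m (semiSep u v p q d) :=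
        leadDet_congr fun i hi j hj => by simp [hi.ne]
      have h2 : leadDet (m + 1) (fun i j => if j = m then (if i < m then u i else 0)
          else if i = m then (if j < m then q j else 0) else semiSep u v p q d i j)
          = leadDet (m + 1) (bordered u v p q d m) :=
        leadDet_congr fun i hi j hj => by
          unfold bordered
          grind
      rw [h1, h2]
      simp
      ring
    · intro i hi
      unfold semiSep
      grind
  · intro j hj
    unfold semiSep
    grind

lemma leadDet_bordered_succ (m : ℕ) :
    leadDet (m + 2) (bordered u v p q d (m + 1)) =
      (d m - p m * q m - u m * v m) * leadDet (m + 1) (bordered u v p q d m)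
        - u m * q m * leadDet m (semiSep u v p q d) := by
  set δ := d m - p m * q m - u m * v m with hδ
  set M := semiSep u v p q d with hM
  have hMd : M m m = d m := by simp [hM, semiSep]
  have hMu : ∀ i < m, M i m = u i * v m := fun i hi => by simp [hM, semiSep, hi.ne, hi]
  have hMl : ∀ j < m, M m j = p m * q j := fun j hj => by
    simp [hM, semiSep, hj.ne', hj.not_gt]
  -- The border is moved in front of the index `m`.
  have h0 : leadDet (m + 2) (bordered u v p q d (m + 1)) = leadDet (m + 2) (fun i j =>
      if i < m then (if j < m then M i j else if j = m then u i else u i * v m)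
      else if i = m then (if j < m then q j else if j = m then 0 else q m)
      else (if j < m then p m * q j else if j = m then u m else d m)) := by
    rw [← neg_neg (leadDet _ _), ← leadDet_swap_col, ← leadDet_swap_row]
    refine leadDet_congr fun i hi j hj => ?_
    simp only [bordered, Equiv.swap_apply_def]
    grind
  -- Subtract `p m` times the border row from the last row.
  have h1 : leadDet (m + 2) (bordered u v p q d (m + 1)) = leadDet (m + 2) (fun i j =>
      if i < m then (if j < m then M i j else if j = m then u i else u i * v m)
      else if i = m then (if j < m then q j else if j = m then 0 else q m)
      else (if j < m then 0 else if j = m then u m else d m - p m * q m)) := by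
    rw [h0, leadDet_row_linear (m + 1) _ (p m)
      (fun j => if j < m then q j else if j = m then 0 else q m)
      (fun j => if j < m then 0 else if j = m then u m else d m - p m * q m),
      leadDet_row_eq, mul_zero, zero_add]
    · refine leadDet_congr fun i hi j hj => ?_
      grind
    · intro j hj
      simp
    · intro j hj
      grind
  -- Subtract `v m` times the border column from the last column.
  have h2 : leadDet (m + 2) (bordered u v p q d (m + 1)) = leadDet (m + 2) (fun i j =>
      if i < m then (if j < m then M i j else if j = m then u i else 0)
      else if i = m then (if j < m then q j else if j = m then 0 else q m)
      else (if j < m then 0 else if j = m then u m else δ)) := by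
    rw [h1, leadDet_col_linear (m + 1) _ (v m)
      (fun i => if i < m then u i else if i = m then 0 else u m)
      (fun i => if i < m then 0 else if i = m then q m else δ),
      leadDet_col_eq, mul_zero, zero_add]
    · refine leadDet_congr fun i hi j hj => ?_
      grind
    · intro j hj
      grind
    · intro j hj
      grind
  -- Split the last row `(0, u m, δ)` as `u m * (0, 1, 0) + (0, 0, δ)`.
  rw [h2, leadDet_row_linear (m + 1) _ (u m) (fun j => if j = m then 1 else 0)
      (fun j => if j ≤ m then 0 else δ), leadDet_last_row (m + 1) (fun i j =>
        if i = m + 1 then (if j ≤ m then 0 else δ) else _)]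
  · have h3 : leadDet (m + 1) (fun i j => if i = m + 1 then (if j ≤ m then 0 else δ) else
        if i < m then (if j < m then M i j else if j = m then u i else 0)
        else if i = m then (if j < m then q j else if j = m then 0 else q m)
        else (if j < m then 0 else if j = m then u m else δ))
        = leadDet (m + 1) (bordered u v p q d m) := by
      refine leadDet_congr fun i hi j hj => ?_
      simp only [bordered]
      grind
    have h4 : leadDet (m + 2) (fun i j => if i = m + 1 then (if j = m then 1 else 0) else
        if i < m then (if j < m then M i j else if j = m then u i else 0)
        else if i = m then (if j < m then q j else if j = m then 0 else q m)
        else (if j < m then 0 else if j = m then u m else δ))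
        = -(q m * leadDet m M) := by
      rw [← neg_neg (leadDet (m + 2) _), ← leadDet_swap_col, leadDet_last_row (m + 1),
        leadDet_last_col]
      · have h5 : ∀ F : ℕ → ℕ → R, (∀ i < m, ∀ j < m, F i j = M i j) →
            leadDet m F = leadDet m M := fun F hF => leadDet_congr hF
        rw [h5]
        · simp
        · intro i hi j hj
          simp only [Equiv.swap_apply_def]
          grind
      · intro i hi
        simp only [Equiv.swap_apply_def]
        grind
      · intro j hj
        simp only [Equiv.swap_apply_def]
        grind
    rw [h3, h4]
    simp
    ring
  · intro j hj
    grind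
  · intro j hj
    grind

end Semiseparable

/-! ### The recursion for `fFun` -/

section SubsetSums

variable (n : ℕ) (ξ : ℕ → ℝ) (e : ℝ) (μ : ℂ)

/-- The contribution of the index set `s = {i_1 < ⋯ < i_k}` to `fFun n N ξ e μ`. -/
noncomputable def subsetTerm (N : ℕ) (s : Finset ℕ) : ℂ :=
  μ ^ (N - s.card) / (e : ℂ) ^ s.card * (((-1 : ℝ) ^ (∑ i ∈ s, i) *
    Real.exp (2 * n * ∑ i ∈ s, (-1 : ℝ) ^ ((s.filter (· ≤ i)).card) * ξ i) : ℝ) : ℂ)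

/-- The part of `fFun n N ξ e μ` coming from index sets of even size. -/
noncomputable def evenPart (N : ℕ) : ℂ :=
  ∑ s ∈ (Finset.Icc 1 N).powerset, if Even s.card then subsetTerm n ξ e μ N s else 0

/-- The part of `fFun n N ξ e μ` coming from index sets of odd size. -/
noncomputable def oddPart (N : ℕ) : ℂ :=
  ∑ s ∈ (Finset.Icc 1 N).powerset, if Even s.card then 0 else subsetTerm n ξ e μ N s

lemma fFun_eq_add (N : ℕ) :
    fFun n N ξ e μ = evenPart n ξ e μ N + oddPart n ξ e μ N := by
  have h : evenPart n ξ e μ N + oddPart n ξ e μ N =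
      ∑ s ∈ (Finset.Icc 1 N).powerset, subsetTerm n ξ e μ N s := by
    rw [evenPart, oddPart, ← Finset.sum_add_distrib]
    refine Finset.sum_congr rfl fun s _ => ?_
    split_ifs <;> simp
  rw [h, Finset.sum_powerset, Nat.card_Icc, Nat.add_sub_cancel, fFun]
  refine Finset.sum_congr rfl fun k _ => ?_
  rw [sgnExpSum, Complex.ofReal_sum, Finset.mul_sum]
  refine Finset.sum_congr rfl fun s hs => ?_
  rw [subsetTerm, (Finset.mem_powersetCard.mp hs).2]

lemma subsetTerm_succ {N : ℕ} {s : Finset ℕ} (hs : s ⊆ Finset.Icc 1 N) :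
    subsetTerm n ξ e μ (N + 1) s = μ * subsetTerm n ξ e μ N s := by
  have hc : s.card ≤ N := by simpa using Finset.card_le_card hs
  rw [subsetTerm, subsetTerm, Nat.succ_sub hc, pow_succ]
  ring

/-- A new largest index takes the last position `s.card + 1`, leaving the other positions
unchanged. -/
lemma subsetTerm_insert {N : ℕ} {s : Finset ℕ} (hs : s ⊆ Finset.Icc 1 N) :
    subsetTerm n ξ e μ (N + 1) (insert (N + 1) s) = (-1) ^ (N + 1) / (e : ℂ) *
      ((Real.exp (2 * n * ((-1) ^ (s.card + 1) * ξ (N + 1))) : ℝ) : ℂ) *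
        subsetTerm n ξ e μ N s := by
  have hlt : ∀ i ∈ s, i < N + 1 := fun i hi => by
    have := Finset.mem_Icc.mp (hs hi)
    omega
  have hN : N + 1 ∉ s := fun h => lt_irrefl _ (hlt _ h)
  have hf1 : (insert (N + 1) s).filter (· ≤ N + 1) = insert (N + 1) s :=
    Finset.filter_true_of_mem fun i hi => by
      rcases Finset.mem_insert.mp hi with rfl | h
      · exact le_rfl
      · exact (hlt i h).le
  have hf2 : ∀ i ∈ s, (insert (N + 1) s).filter (· ≤ i) = s.filter (· ≤ i) := fun i hi => by
    rw [Finset.filter_insert, if_neg (by have := hlt i hi; omega)]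
  have hsum : ∑ i ∈ insert (N + 1) s,
      (-1 : ℝ) ^ (((insert (N + 1) s).filter (· ≤ i)).card) * ξ i =
      (-1) ^ (s.card + 1) * ξ (N + 1) +
        ∑ i ∈ s, (-1 : ℝ) ^ ((s.filter (· ≤ i)).card) * ξ i := by
    rw [Finset.sum_insert hN, hf1, Finset.card_insert_of_notMem hN]
    congr 1
    exact Finset.sum_congr rfl fun i hi => by rw [hf2 i hi]
  rw [subsetTerm, subsetTerm, hsum, Finset.card_insert_of_notMem hN, Finset.sum_insert hN,
    Nat.add_sub_add_right, mul_add, Real.exp_add, pow_add (-1 : ℝ), pow_succ (e : ℂ)]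
  push_cast
  ring

lemma evenPart_succ (N : ℕ) :
    evenPart n ξ e μ (N + 1) = μ * evenPart n ξ e μ N +
      (-1) ^ (N + 1) / (e : ℂ) * ((Real.exp (2 * n * ξ (N + 1)) : ℝ) : ℂ) *
        oddPart n ξ e μ N := by
  have hN : N + 1 ∉ Finset.Icc 1 N := by simp
  rw [evenPart, ← Finset.insert_Icc_right_eq_Icc_add_one (by omega), Finset.sum_powerset_insert hN,
    evenPart, oddPart, Finset.mul_sum, Finset.mul_sum]
  congr 1
  · refine Finset.sum_congr rfl fun s hs => ?_
    rw [subsetTerm_succ _ _ _ _ (Finset.mem_powerset.mp hs)]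
    split_ifs <;> simp
  · refine Finset.sum_congr rfl fun s hs => ?_
    have hs := Finset.mem_powerset.mp hs
    rw [subsetTerm_insert _ _ _ _ hs, Finset.card_insert_of_notMem fun h => hN (hs h)]
    by_cases h : Even s.card
    · simp [h, Nat.even_add_one]
    · have h1 : Even (s.card + 1) := Nat.even_add_one.mpr h
      simp [h, h1, h1.neg_one_pow]

lemma oddPart_succ (N : ℕ) :
    oddPart n ξ e μ (N + 1) = μ * oddPart n ξ e μ N +
      (-1) ^ (N + 1) / (e : ℂ) * ((Real.exp (-(2 * n * ξ (N + 1))) : ℝ) : ℂ) *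
        evenPart n ξ e μ N := by
  have hN : N + 1 ∉ Finset.Icc 1 N := by simp
  rw [oddPart, ← Finset.insert_Icc_right_eq_Icc_add_one (by omega), Finset.sum_powerset_insert hN,
    evenPart, oddPart, Finset.mul_sum, Finset.mul_sum]
  congr 1
  · refine Finset.sum_congr rfl fun s hs => ?_
    rw [subsetTerm_succ _ _ _ _ (Finset.mem_powerset.mp hs)]
    split_ifs <;> simp
  · refine Finset.sum_congr rfl fun s hs => ?_
    have hs := Finset.mem_powerset.mp hs
    rw [subsetTerm_insert _ _ _ _ hs, Finset.card_insert_of_notMem fun h => hN (hs h)]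
    by_cases h : Even s.card
    · simp [h, Nat.even_add_one, h.add_one.neg_one_pow]
    · have h1 : Even (s.card + 1) := Nat.even_add_one.mpr h
      simp [h, h1]

end SubsetSums

/-! ### The NP matrices -/

/-- The array `μ I - K` common to both NP matrices, with `ε = -1` for `K_{N,c}` and `ε = 1` for
`K_{N,s}`: `cosh` and `sinh` of `n ξ` are the two values of `(exp (n ξ) ± exp (-n ξ)) / 2`. -/
noncomputable def npArray (n : ℕ) (ξ : ℕ → ℝ) (ε : ℝ) (μ : ℂ) : ℕ → ℕ → ℂ := fun i j =>
  semiSep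
    (fun a => (-1) ^ a * (Real.exp (-(n * ξ (a + 1))) : ℂ))
    (fun a => ((Real.exp (n * ξ (a + 1)) : ℂ) - ε * (Real.exp (-(n * ξ (a + 1))) : ℂ)) / 2)
    (fun a => -(-1) ^ a *
      ((Real.exp (n * ξ (a + 1)) : ℂ) + ε * (Real.exp (-(n * ξ (a + 1))) : ℂ)) / 2)
    (fun a => (Real.exp (-(n * ξ (a + 1))) : ℂ))
    (fun a => μ - ε * (-1) ^ a * (Real.exp (-(n * ξ (a + 1))) : ℂ) ^ 2 / 2) i j

/-- The induction carries along that the bordered determinant attached to `μ I - K` is `2 * ε`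
times the odd part of `fFun`, which closes the two-term recursion. -/
lemma leadDet_npArray (n : ℕ) (ξ : ℕ → ℝ) (ε : ℝ) (hε : ε ^ 2 = 1) (μ : ℂ) (m : ℕ) :
    leadDet m (npArray n ξ ε μ) = fFun n m ξ (2 * ε) μ := by
  have hsq : (ε : ℂ) ^ 2 = 1 := by exact_mod_cast hε
  have hε0 : (ε : ℂ) ≠ 0 := fun h => by simp [h] at hsq
  rw [fFun_eq_add]
  unfold npArray
  set u : ℕ → ℂ := fun a => (-1) ^ a * (Real.exp (-(n * ξ (a + 1))) : ℂ) with hu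
  set v : ℕ → ℂ := fun a =>
    ((Real.exp (n * ξ (a + 1)) : ℂ) - ε * (Real.exp (-(n * ξ (a + 1))) : ℂ)) / 2 with hv
  set p : ℕ → ℂ := fun a => -(-1) ^ a *
    ((Real.exp (n * ξ (a + 1)) : ℂ) + ε * (Real.exp (-(n * ξ (a + 1))) : ℂ)) / 2 with hp
  set q : ℕ → ℂ := fun a => (Real.exp (-(n * ξ (a + 1))) : ℂ) with hq
  set d : ℕ → ℂ := fun a =>
    μ - ε * (-1) ^ a * (Real.exp (-(n * ξ (a + 1))) : ℂ) ^ 2 / 2 with hd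
  suffices h : leadDet m (semiSep u v p q d) =
      evenPart n ξ (2 * ε) μ m + oddPart n ξ (2 * ε) μ m ∧
      leadDet (m + 1) (bordered u v p q d m) = 2 * ε * oddPart n ξ (2 * ε) μ m from h.1
  induction m with
  | zero =>
    simp [leadDet, bordered, evenPart, oddPart, subsetTerm]
  | succ m ih =>
    obtain ⟨ih1, ih2⟩ := ih
    rw [leadDet_semiSep_succ, leadDet_bordered_succ, ih1, ih2, evenPart_succ, oddPart_succ]
    have hX : ((Real.exp (2 * n * ξ (m + 1)) : ℝ) : ℂ) = (Real.exp (n * ξ (m + 1)) : ℂ) ^ 2 := by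
      rw [← Complex.ofReal_pow, ← Real.exp_nat_mul]
      push_cast
      ring_nf
    have hY : ((Real.exp (-(2 * n * ξ (m + 1))) : ℝ) : ℂ) =
        (Real.exp (-(n * ξ (m + 1))) : ℂ) ^ 2 := by
      rw [← Complex.ofReal_pow, ← Real.exp_nat_mul]
      push_cast
      ring_nf
    have hXY : (Real.exp (n * ξ (m + 1)) : ℂ) * (Real.exp (-(n * ξ (m + 1))) : ℂ) = 1 := by
      rw [← Complex.ofReal_mul, ← Real.exp_add]
      simp
    have hinv : (-1 : ℂ) ^ (m + 1) / ((2 * ε : ℝ) : ℂ) = -(ε * (-1) ^ m / 2) := by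
      push_cast
      field_simp
      rw [hsq]
      ring
    rw [hX, hY, hinv]
    simp only [hu, hv, hp, hq, hd]
    generalize (Real.exp (n * ξ (m + 1)) : ℂ) = X at *
    generalize (Real.exp (-(n * ξ (m + 1))) : ℂ) = Y at *
    generalize evenPart n ξ (2 * ε) μ m = E at *
    generalize oddPart n ξ (2 * ε) μ m = O at *
    generalize (-1 : ℂ) ^ m = σ at *
    generalize (ε : ℂ) = η at *
    constructor
    · linear_combination (σ * Y ^ 2 * η * O / 2) * hsq
    · linear_combination (σ * Y ^ 2 * (E + O)) * hsq

/-- The characteristic polynomials of the NP matrices: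
`det(μ I − K_{N,c}) = f_N^−(μ)` and `det(μ I − K_{N,s}) = f_N^+(μ)`. -/
theorem charpoly_K_eq_fFun (N n : ℕ) (hN : 0 < N) (hn : 0 < n) (ξ : ℕ → ℝ)
    (hξ : ∀ i j, 1 ≤ i → i < j → j ≤ N → ξ j < ξ i) (hpos : 0 < ξ N) (μ : ℂ) :
    (μ • (1 : Matrix (Fin N) (Fin N) ℂ) - (Kc n N ξ).map Complex.ofReal).det =
        fFun n N ξ (-2) μ ∧
      (μ • (1 : Matrix (Fin N) (Fin N) ℂ) - (Ks n N ξ).map Complex.ofReal).det =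
        fFun n N ξ 2 μ := by
  have hY : ∀ a : ℕ, ((Real.exp (-(2 * n * ξ (a + 1))) : ℝ) : ℂ) =
      (Real.exp (-(n * ξ (a + 1))) : ℂ) ^ 2 := by
    intro a
    rw [← Complex.ofReal_pow, ← Real.exp_nat_mul]
    push_cast
    ring_nf
  constructor
  · have h := leadDet_npArray n ξ (-1) (by norm_num) μ N
    rw [show (2 * (-1) : ℝ) = -2 by norm_num] at h
    rw [← h, leadDet]
    congr 1
    ext a b
    simp only [Matrix.sub_apply, Matrix.smul_apply, Matrix.one_apply, Matrix.map_apply, Kc,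
      Matrix.of_apply, npArray, semiSep, Fin.ext_iff, Fin.lt_def]
    split_ifs with h1 h2
    · rw [Complex.ofReal_mul, Complex.ofReal_div, hY]
      push_cast
      simp only [smul_eq_mul]
      ring
    · rw [Real.cosh_eq]
      push_cast
      simp only [smul_eq_mul]
      ring
    · rw [Real.sinh_eq]
      push_cast
      simp only [smul_eq_mul]
      ring
  · have h := leadDet_npArray n ξ 1 (by norm_num) μ N
    rw [mul_one] at h
    rw [← h, leadDet]
    congr 1
    ext a b
    simp only [Matrix.sub_apply, Matrix.smul_apply, Matrix.one_apply, Matrix.map_apply, Ks,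
      Matrix.of_apply, npArray, semiSep, Fin.ext_iff, Fin.lt_def]
    split_ifs with h1 h2
    · rw [Complex.ofReal_mul, Complex.ofReal_div, hY]
      push_cast
      simp only [smul_eq_mul]
      ring
    · rw [Real.sinh_eq]
      push_cast
      simp only [smul_eq_mul]
      ring
    · rw [Real.cosh_eq]
      push_cast
      simp only [smul_eq_mul]
      ring
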